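/- arXiv:1712.05454 — 4 statements merged into one kernel-verified Lean document; each statement's English description precedes it below -/
import Mathlib

section
/- Let Λ = {λ_1,…,λ_n} (n ≥ 2) be a finite multiset of complex numbers with critical points Λ'. Then s_2(Λ') = ((n−2)/n)·s_2(Λ) + (1/n²)·s_1(Λ)²; in particular, if Λ is realizable then s_2(Λ') ≥ 0 (i.e., s_2(Λ') is a nonnegative real number). -/
open Polynomial

/-- A finite multiset of complex numbers is realizable if it is the multiset of
roots (with multiplicity) of the characteristic polynomial of some entrywise
nonnegative real matrix. -/
def Realizable (Λ : Multiset ℂ) : Prop :=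
  ∃ (n : ℕ) (A : Matrix (Fin n) (Fin n) ℝ),
    (∀ i j, 0 ≤ A i j) ∧ (A.charpoly.map (algebraMap ℝ ℂ)).roots = Λ

/-!
Comparing coefficients in Vieta's formulas for `p` and `p'` gives `n eₖ(Λ') = (n - k) eₖ(Λ)`, so
`s₂ = e₁² - 2 e₂` turns the cases `k = 1, 2` into the formula for `s₂(Λ')`. If `Λ` is the spectrum
of a nonnegative matrix `A`, then `sₖ(Λ) = tr (A ^ k) ≥ 0`. This trace identity is the spectral
mapping theorem with multiplicities: `det q(A)` and `∏ q(λᵢ)` are both multiplicative in `q`, so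
they agree for every split `q` because they do for constants and for `X + a`.
-/

section ElementarySymmetric

variable {R : Type*} [CommSemiring R]

lemma esymm_one (s : Multiset R) : s.esymm 1 = s.sum := by
  simp [Multiset.esymm, Multiset.powersetCard_one]

lemma esymm_eq_zero_of_card_lt {s : Multiset R} {k : ℕ} (h : s.card < k) : s.esymm k = 0 := by
  simp [Multiset.esymm, Multiset.powersetCard_eq_empty k h]

lemma esymm_cons_succ (a : R) (s : Multiset R) (k : ℕ) :
    (a ::ₘ s).esymm (k + 1) = s.esymm (k + 1) + a * s.esymm k := by
  simp [Multiset.esymm, Multiset.powersetCard_cons, Multiset.sum_map_mul_left]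

lemma sum_sq_eq_sum_map_sq_add_two_mul_esymm_two (s : Multiset R) :
    s.sum ^ 2 = (s.map (· ^ 2)).sum + 2 * s.esymm 2 := by
  induction s using Multiset.induction_on with
  | empty => rw [esymm_eq_zero_of_card_lt (by simp)]; simp
  | cons a s ih =>
    rw [Multiset.sum_cons, Multiset.map_cons, Multiset.sum_cons, esymm_cons_succ, esymm_one,
      add_sq, ih]
    ring

end ElementarySymmetric

section CriticalPoints

variable {R : Type*} [CommRing R] [IsDomain R] [CharZero R] {p : R[X]}

lemma natDegree_mul_esymm_roots_derivative (hp : p.Splits) (hp' : p.derivative.Splits) (k : ℕ) :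
    (p.natDegree : R) * p.derivative.roots.esymm k =
      ((p.natDegree : R) - k) * p.roots.esymm k := by
  have hcard := hp.natDegree_eq_card_roots
  have hcard' := hp'.natDegree_eq_card_roots
  have hdegree := natDegree_derivative p
  rcases lt_trichotomy k p.natDegree with hk | rfl | hk
  · obtain ⟨m, hm⟩ := Nat.exists_eq_add_of_lt hk
    have hvieta : p.coeff (m + 1) = p.leadingCoeff * (-1) ^ k * p.roots.esymm k := by
      rw [coeff_eq_esymm_roots_of_card hcard.symm (by omega),
        show p.natDegree - (m + 1) = k by omega]
    have hvieta' : p.coeff (m + 1) * (m + 1) =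
        p.leadingCoeff * p.natDegree * (-1) ^ k * p.derivative.roots.esymm k := by
      rw [← coeff_derivative, coeff_eq_esymm_roots_of_card hcard'.symm (by omega),
        leadingCoeff_derivative, show p.derivative.natDegree - m = k by omega]
    have hlead : p.leadingCoeff * (-1) ^ k ≠ 0 :=
      mul_ne_zero (leadingCoeff_ne_zero.2 (ne_zero_of_natDegree_gt hk)) (by simp)
    have hm' : (p.natDegree : R) - k = m + 1 := by rw [hm]; push_cast; ring
    refine mul_left_cancel₀ hlead ?_
    linear_combination (m + 1) * hvieta - hvieta'
      - p.leadingCoeff * (-1) ^ k * p.roots.esymm k * hm'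
  · obtain hzero | hpos := Nat.eq_zero_or_pos p.natDegree
    · simp [hzero]
    · simp [esymm_eq_zero_of_card_lt (show p.derivative.roots.card < p.natDegree by omega)]
  · rw [esymm_eq_zero_of_card_lt (by omega), esymm_eq_zero_of_card_lt (by omega), mul_zero,
      mul_zero]

lemma natDegree_sq_mul_sum_map_sq_roots_derivative (hp : p.Splits) (hp' : p.derivative.Splits) :
    (p.natDegree : R) ^ 2 * (p.derivative.roots.map (· ^ 2)).sum =
      p.natDegree * (p.natDegree - 2) * (p.roots.map (· ^ 2)).sum + p.roots.sum ^ 2 := by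
  have hesymm₁ := natDegree_mul_esymm_roots_derivative hp hp' 1
  have hesymm₂ := natDegree_mul_esymm_roots_derivative hp hp' 2
  rw [esymm_one, esymm_one, Nat.cast_one] at hesymm₁
  rw [Nat.cast_ofNat] at hesymm₂
  have hsq := sum_sq_eq_sum_map_sq_add_two_mul_esymm_two p.roots
  have hsq' := sum_sq_eq_sum_map_sq_add_two_mul_esymm_two p.derivative.roots
  set n : R := (p.natDegree : R)
  linear_combination (n * p.derivative.roots.sum + (n - 1) * p.roots.sum) * hesymm₁
    - 2 * n * hesymm₂ + n * (n - 2) * hsq - n ^ 2 * hsq'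

end CriticalPoints

section SpectralMapping

variable {ι : Type*} [Fintype ι] [DecidableEq ι]

section Splits

variable {R : Type*} [CommRing R] [IsDomain R] {A : Matrix ι ι R}

lemma card_roots_charpoly_of_splits (hA : A.charpoly.Splits) :
    A.charpoly.roots.card = Fintype.card ι := by
  rw [← hA.natDegree_eq_card_roots, A.charpoly_natDegree_eq_dim]

lemma det_add_scalar_eq_prod_roots_charpoly (hA : A.charpoly.Splits) (a : R) :
    (A + Matrix.scalar ι a).det = (A.charpoly.roots.map (· + a)).prod := by
  calc (A + Matrix.scalar ι a).det
      = (-(Matrix.scalar ι (-a) - A)).det := by rw [map_neg]; congr 1; abel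
    _ = (-1) ^ Fintype.card ι * (A.charpoly.roots.map (-a - ·)).prod := by
        rw [Matrix.det_neg, ← Matrix.eval_charpoly,
          hA.eval_eq_prod_roots_of_monic A.charpoly_monic]
    _ = (A.charpoly.roots.map (· + a)).prod := by
        rw [← card_roots_charpoly_of_splits hA, ← Multiset.card_map (-a - ·),
          ← Multiset.prod_map_neg, Multiset.map_map]
        simp

lemma det_aeval_eq_prod_roots_charpoly (hA : A.charpoly.Splits) {q : R[X]} (hq : q.Splits) :
    (aeval A q).det = (A.charpoly.roots.map q.eval).prod := by
  induction hq using Submonoid.closure_induction with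
  | mem q hq =>
    obtain ⟨a, rfl⟩ | ⟨a, rfl⟩ := hq
    · simp [Matrix.algebraMap_eq_diagonal, card_roots_charpoly_of_splits hA]
    · simpa [Matrix.algebraMap_eq_diagonal, Pi.algebraMap_def] using
        det_add_scalar_eq_prod_roots_charpoly hA a
  | one => simp
  | mul f g _ _ hf hg => simp [hf, hg]

end Splits

variable {K : Type*} [Field K] [IsAlgClosed K]

lemma roots_charpoly_aeval (A : Matrix ι ι K) (q : K[X]) :
    (aeval A q).charpoly.roots = A.charpoly.roots.map q.eval := by
  suffices h : (aeval A q).charpoly = ((A.charpoly.roots.map q.eval).map (X - C ·)).prod by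
    rw [h, roots_multiset_prod_X_sub_C]
  refine Polynomial.funext fun t => ?_
  have hshift : Matrix.scalar ι t - aeval A q = aeval A (C t - q) := by
    simp [Matrix.algebraMap_eq_diagonal]
  rw [Matrix.eval_charpoly, hshift,
    det_aeval_eq_prod_roots_charpoly (IsAlgClosed.splits _) (IsAlgClosed.splits _)]
  simp [eval_multiset_prod]

lemma trace_pow_eq_sum_map_pow_roots_charpoly (A : Matrix ι ι K) (k : ℕ) :
    (A ^ k).trace = (A.charpoly.roots.map (· ^ k)).sum := by
  rw [Matrix.trace_eq_sum_roots_charpoly]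
  simpa using congrArg Multiset.sum (roots_charpoly_aeval A (X ^ k))

end SpectralMapping

open scoped ComplexOrder in
lemma Realizable.sum_map_pow_nonneg {Λ : Multiset ℂ} (hΛ : Realizable Λ) (k : ℕ) :
    0 ≤ (Λ.map (· ^ k)).sum := by
  obtain ⟨n, A, hA, rfl⟩ := hΛ
  have htrace : 0 ≤ (A ^ k).trace :=
    Finset.sum_nonneg fun i _ => Matrix.pow_apply_nonneg hA k i i
  rw [← Matrix.charpoly_map, ← trace_pow_eq_sum_map_pow_roots_charpoly, ← Matrix.map_pow,
    ← AddMonoidHom.map_trace (algebraMap ℝ ℂ)]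
  exact Complex.zero_le_real.2 htrace

/-- s₂(Λ') = ((n-2)/n)·s₂(Λ) + (1/n²)·s₁(Λ)²; in particular, if Λ is
realizable then s₂(Λ') is a nonnegative real number. -/
theorem second_moment_of_critical_points (n : ℕ) (hn : 2 ≤ n)
    (Λ : Multiset ℂ) (hcard : Λ.card = n)
    (p : Polynomial ℂ) (hp : p = (Λ.map fun l => X - C l).prod)
    (Λ' : Multiset ℂ) (hΛ' : Λ' = p.derivative.roots) :
    (Λ'.map fun z => z ^ 2).sum
        = (((n : ℂ) - 2) / (n : ℂ)) * (Λ.map fun z => z ^ 2).sum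
          + (1 / (n : ℂ) ^ 2) * Λ.sum ^ 2 ∧
      (Realizable Λ →
        ((Λ'.map fun z => z ^ 2).sum).im = 0 ∧ 0 ≤ ((Λ'.map fun z => z ^ 2).sum).re) := by
  have hroots : p.roots = Λ := hp ▸ roots_multiset_prod_X_sub_C Λ
  have hdegree : p.natDegree = n := by
    rw [hp, natDegree_multiset_prod_X_sub_C_eq_card, hcard]
  have hn₀ : (n : ℂ) ≠ 0 := Nat.cast_ne_zero.2 (by omega)
  have hmoment := natDegree_sq_mul_sum_map_sq_roots_derivative
    (IsAlgClosed.splits p) (IsAlgClosed.splits p.derivative)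
  rw [hdegree, hroots, ← hΛ'] at hmoment
  have hformula : (Λ'.map fun z => z ^ 2).sum
      = (((n : ℂ) - 2) / (n : ℂ)) * (Λ.map fun z => z ^ 2).sum
        + (1 / (n : ℂ) ^ 2) * Λ.sum ^ 2 := by
    field_simp
    linear_combination hmoment
  refine ⟨hformula, fun hΛ => ?_⟩
  open scoped ComplexOrder in
  have hnonneg : 0 ≤ (Λ'.map fun z => z ^ 2).sum := by
    have hs₁ : 0 ≤ Λ.sum := by simpa using hΛ.sum_map_pow_nonneg 1
    have hs₂ := hΛ.sum_map_pow_nonneg 2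
    have hn₂ : (0 : ℂ) ≤ n - 2 := sub_nonneg.2 (mod_cast hn)
    rw [hformula]
    positivity
  exact ⟨(Complex.nonneg_iff.1 hnonneg).2.symm, (Complex.nonneg_iff.1 hnonneg).1⟩
end

section
/- If Λ = {λ_1,…,λ_n} (n ≥ 2) is a Suleĭmanova spectrum, then the multiset Λ' of critical points of Λ is also a Suleĭmanova spectrum (with n − 1 elements). -/
open Polynomial

/-!
By Rolle's theorem, counted with multiplicity, any interval containing `k` roots of a real-rooted
polynomial of degree `n` contains at least `k - 1` of its `n - 1` critical points; hence the
complement of the interval contains at most as many critical points as roots. Applied to `(-∞, 0)`,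
this bounds the number of nonnegative critical points by `1`. Conversely, the critical points have
the same mean as the roots, so their sum is nonnegative and they cannot all be negative.
-/

theorem multiset_card_le_card_add_one_of_interleaved {α : Type*} [LinearOrder α] {A B : Multiset α}
    (hcount : ∀ x ∈ A, A.count x ≤ B.count x + 1)
    (hbetween : ∀ x ∈ A, ∀ y ∈ A, x < y → (∀ z ∈ A, z ∉ Set.Ioo x y) → ∃ z ∈ B, x < z ∧ z < y) :
    A.card ≤ B.card + 1 := by
  have hdistinct : A.toFinset.card ≤ (B.toFinset \ A.toFinset).card + 1 :=
    Finset.card_le_sdiff_of_interleaved (by simpa using hbetween)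
  -- `B` contains the surplus copies of the elements of `A` alongside its elements outside `A`.
  have hsurplus : A - A.dedup + (B.toFinset \ A.toFinset).val ≤ B := by
    refine Multiset.le_iff_count.mpr fun x => ?_
    simp only [Finset.sdiff_val, Multiset.toFinset_val, Multiset.count_add, Multiset.count_sub,
      Multiset.count_dedup]
    have hB : (if x ∈ B then 1 else 0) ≤ B.count x := by
      split_ifs with hB
      exacts [Multiset.one_le_count_iff_mem.mpr hB, Nat.zero_le _]
    by_cases hA : x ∈ A
    · have := hcount x hA
      simp only [hA, if_true]
      split_ifs <;> omega
    · simpa [hA] using hB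
  calc
    A.card = (A - A.dedup).card + A.toFinset.card := by
      rw [Multiset.card_toFinset, ← Multiset.card_add, tsub_add_cancel_of_le A.dedup_le]
    _ ≤ (A - A.dedup).card + (B.toFinset \ A.toFinset).card + 1 := by
      rw [add_assoc]; gcongr
    _ = (A - A.dedup + (B.toFinset \ A.toFinset).val).card + 1 := by
      rw [Multiset.card_add, Finset.card_val]
    _ ≤ B.card + 1 := by gcongr

theorem multiset_exists_nonneg_of_sum_nonneg {M : Type*} [AddCommMonoid M] [LinearOrder M]
    [IsOrderedCancelAddMonoid M] {s : Multiset M} (hs : s ≠ 0) (hsum : 0 ≤ s.sum) :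
    ∃ x ∈ s, 0 ≤ x := by
  by_contra! hneg
  have := Multiset.sum_lt_sum_of_nonempty (f := id) (g := fun _ => 0) hs hneg
  simp only [Multiset.map_id, Multiset.map_const', Multiset.sum_replicate, smul_zero] at this
  exact this.not_ge hsum

theorem nextCoeff_derivative {R : Type*} [Semiring R] [IsAddTorsionFree R] (p : R[X]) :
    p.derivative.nextCoeff = (p.natDegree - 1 : ℕ) * p.nextCoeff := by
  rcases hn : p.natDegree with _ | _ | n
  · simp [nextCoeff, natDegree_derivative, hn]
  · simp [nextCoeff, natDegree_derivative, hn]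
  · rw [nextCoeff_of_natDegree_pos (by simp [natDegree_derivative, hn]),
      nextCoeff_of_natDegree_pos (by simp [hn]), natDegree_derivative, hn, coeff_derivative]
    push_cast [Nat.add_sub_cancel]
    exact_mod_cast (Nat.cast_commute (n + 1) (p.coeff (n + 1))).eq.symm

theorem natDegree_mul_sum_roots_derivative {R : Type*} [CommRing R] [IsDomain R] [CharZero R]
    {p : R[X]} (hp : p.Splits) (hp' : p.derivative.Splits) :
    p.natDegree * p.derivative.roots.sum = (p.natDegree - 1 : ℕ) * p.roots.sum := by
  rcases eq_or_ne p 0 with rfl | hp0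
  · simp
  have h := nextCoeff_derivative p
  rw [hp.nextCoeff_eq_neg_sum_roots_mul_leadingCoeff,
    hp'.nextCoeff_eq_neg_sum_roots_mul_leadingCoeff, leadingCoeff_derivative] at h
  refine mul_left_cancel₀ (neg_ne_zero.mpr (leadingCoeff_ne_zero.mpr hp0)) ?_
  linear_combination h

theorem splits_derivative {p : ℝ[X]} (hp : p.Splits) : p.derivative.Splits := by
  have hle := card_roots_le_derivative p
  have hge := card_roots' p.derivative
  rw [← hp.natDegree_eq_card_roots] at hle
  rw [natDegree_derivative] at hge
  rw [splits_iff_card_roots, natDegree_derivative]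
  omega

theorem countP_mem_roots_le_countP_mem_roots_derivative_add_one (p : ℝ[X]) {s : Set ℝ}
    [DecidablePred (· ∈ s)] (hs : s.OrdConnected) :
    p.roots.countP (· ∈ s) ≤ p.derivative.roots.countP (· ∈ s) + 1 := by
  rcases eq_or_ne p.derivative 0 with hp' | hp'
  · rw [eq_C_of_derivative_eq_zero hp']
    simp
  simp only [Multiset.countP_eq_card_filter]
  refine multiset_card_le_card_add_one_of_interleaved (fun x hx => ?_) fun x hx y hy hxy _ => ?_
  · have hxs : x ∈ s := Multiset.of_mem_filter hx
    rw [Multiset.count_filter_of_pos hxs, Multiset.count_filter_of_pos hxs, count_roots,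
      count_roots, ← Nat.sub_le_iff_le_add]
    exact rootMultiplicity_sub_one_le_derivative_rootMultiplicity p x
  · obtain ⟨hxp, hxs⟩ := Multiset.mem_filter.mp hx
    obtain ⟨hyp, hys⟩ := Multiset.mem_filter.mp hy
    obtain ⟨z, hz, hpz⟩ := exists_deriv_eq_zero hxy p.continuousOn
      ((isRoot_of_mem_roots hxp).trans (isRoot_of_mem_roots hyp).symm)
    rw [p.deriv] at hpz
    exact ⟨z, Multiset.mem_filter.mpr
      ⟨(mem_roots hp').mpr hpz, hs.out hxs hys (Set.Ioo_subset_Icc_self hz)⟩, hz⟩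

theorem countP_notMem_roots_derivative_le_countP_notMem_roots {p : ℝ[X]} {s : Set ℝ}
    [DecidablePred (· ∈ s)] (hp : p.Splits) (hs : s.OrdConnected) :
    p.derivative.roots.countP (· ∉ s) ≤ p.roots.countP (· ∉ s) := by
  have hrolle := countP_mem_roots_le_countP_mem_roots_derivative_add_one p hs
  have hroots := p.roots.card_eq_countP_add_countP (· ∈ s)
  have hcrit := p.derivative.roots.card_eq_countP_add_countP (· ∈ s)
  rw [← hp.natDegree_eq_card_roots] at hroots
  rw [← (splits_derivative hp).natDegree_eq_card_roots, natDegree_derivative] at hcrit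
  omega

theorem sum_roots_derivative_nonneg {p : ℝ[X]} (hp : p.Splits) (hsum : 0 ≤ p.roots.sum) :
    0 ≤ p.derivative.roots.sum := by
  rcases p.natDegree.eq_zero_or_pos with hn | hn
  · simp [derivative_of_natDegree_zero hn]
  · have hn : (0 : ℝ) < p.natDegree := mod_cast hn
    refine nonneg_of_mul_nonneg_right ?_ hn
    rw [natDegree_mul_sum_roots_derivative hp (splits_derivative hp)]
    positivity

/-- if Λ is a Suleĭmanova spectrum (a real list with nonnegative sum
and exactly one nonnegative entry), then the multiset Λ' of critical points of Λ
is also a Suleĭmanova spectrum with n - 1 elements (in particular all critical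
points are real). -/
theorem critical_points_of_suleimanova (n : ℕ) (hn : 2 ≤ n)
    (Λ : Multiset ℝ) (hcard : Λ.card = n)
    (hsum : 0 ≤ Λ.sum)
    (hone : (Λ.filter fun x => 0 ≤ x).card = 1)
    (p : Polynomial ℝ) (hp : p = (Λ.map fun l => X - C l).prod)
    (Λ' : Multiset ℝ) (hΛ' : Λ' = p.derivative.roots) :
    Λ'.card = n - 1 ∧ 0 ≤ Λ'.sum ∧ (Λ'.filter fun x => 0 ≤ x).card = 1 := by
  have hroots : p.roots = Λ := hp ▸ roots_multiset_prod_X_sub_C Λ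
  have hdeg : p.natDegree = n := by rw [hp, natDegree_multiset_prod_X_sub_C_eq_card, hcard]
  have hsplits : p.Splits := by rw [splits_iff_card_roots, hroots, hdeg, hcard]
  have hcard' : Λ'.card = n - 1 := by
    rw [hΛ', ← (splits_derivative hsplits).natDegree_eq_card_roots, natDegree_derivative, hdeg]
  have hsum' : 0 ≤ Λ'.sum := hΛ' ▸ sum_roots_derivative_nonneg hsplits (hroots ▸ hsum)
  have hle : Λ'.countP (0 ≤ ·) ≤ Λ.countP (0 ≤ ·) := by
    simpa only [hroots, ← hΛ', Set.mem_Iio, not_lt] using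
      countP_notMem_roots_derivative_le_countP_notMem_roots hsplits (Set.ordConnected_Iio (a := 0))
  have hpos : 0 < Λ'.countP (0 ≤ ·) :=
    Multiset.countP_pos.mpr <| multiset_exists_nonneg_of_sum_nonneg
      (Multiset.card_pos.mp (by omega)) hsum'
  rw [← Multiset.countP_eq_card_filter] at hone ⊢
  exact ⟨hcard', hsum', by omega⟩
end

section
/- Let p(t) = ∏_{i=1}^n (t − λ_i) be a polynomial of degree n ≥ 2 with complex roots λ_1,…,λ_n, let D = diag(λ_2,…,λ_n) ∈ M_{n−1}(ℂ), and let I and J denote the (n−1)-by-(n−1) identity and all-ones matrices. Then the characteristic polynomial of the d-companion matrix A = D(I − (1/n)J) + (λ_1/n)J equals (1/n)·p'(t); equivalently, the multiset of eigenvalues of A (with multiplicity) is the multiset of critical points of p. -/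
open Polynomial

/-!
Writing `c = 1 / n`, the matrix `A` is `D` perturbed by a matrix of rank one: its entries are
`A i j = D i j - c (λᵢ - λ₁)`. The matrix determinant lemma therefore gives
`charpoly A = q + c ∑ᵢ (λᵢ - λ₁) qᵢ`, where `q = ∏ᵢ (X - λᵢ)` and `qᵢ = q / (X - λᵢ)` with `i`
ranging over `2, …, n`. Since `λᵢ - λ₁ = (X - λ₁) - (X - λᵢ)`, the sum equals
`(X - λ₁) q' - (n - 1) q = p' - n q`, and `c n = 1` leaves `charpoly A = c p'`.
-/

theorem alternatingMap_piecewise_smul_const_eq_zero {ι R M N : Type*} [DecidableEq ι]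
    [CommSemiring R] [AddCommMonoid M] [Module R M] [AddCommMonoid N] [Module R N]
    (f : M [⋀^ι]→ₗ[R] N) (x : ι → M) (u : ι → R) (v : M) {s : Finset ι} (hs : 1 < s.card) :
    f (s.piecewise (fun i => u i • v) x) = 0 := by
  obtain ⟨i, hi, j, hj, hij⟩ := Finset.one_lt_card.mp hs
  let y : ι → M := s.piecewise (fun _ => v) x
  have f_y : f y = 0 := f.map_eq_zero_of_eq y (by simp [y, hi, hj]) hij
  have pull_out : s.piecewise (fun k => u k • v) x = s.piecewise (fun k => u k • y k) y := by
    ext k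
    by_cases hk : k ∈ s <;> simp [y, hk]
  calc f (s.piecewise (fun k => u k • v) x)
    _ = (∏ k ∈ s, u k) • f y := by
      rw [pull_out]
      exact f.toMultilinearMap.map_piecewise_smul u y s
    _ = 0 := by rw [f_y, smul_zero]

theorem alternatingMap_add_smul_const {ι R M N : Type*} [Fintype ι] [DecidableEq ι]
    [CommSemiring R] [AddCommGroup M] [Module R M] [AddCommGroup N] [Module R N]
    (f : M [⋀^ι]→ₗ[R] N) (x : ι → M) (u : ι → R) (v : M) :
    f (x + fun i => u i • v) = f x + ∑ i, u i • f (Function.update x i v) := by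
  have expand := f.toMultilinearMap.map_add_eq_map_add_linearDeriv_add x (fun i => u i • v)
  rw [MultilinearMap.linearDeriv_apply] at expand
  simp only [AlternatingMap.coe_multilinearMap, AlternatingMap.map_update_smul] at expand
  have higher_order_terms :
      ∑ s : Finset ι with 2 ≤ s.card, f (s.piecewise (fun i => u i • v) x) = 0 :=
    Finset.sum_eq_zero fun s hs =>
      alternatingMap_piecewise_smul_const_eq_zero f x u v (Finset.mem_filter.mp hs).2
  rw [expand, higher_order_terms, add_zero]

section DCompanion

variable {ι R : Type*} [Fintype ι] [DecidableEq ι] [CommRing R]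

open Matrix

theorem det_add_vecMulVec (A : Matrix ι ι R) (u v : ι → R) :
    (A + vecMulVec u v).det = A.det + u ⬝ᵥ Aᵀ.cramer v := by
  simp only [dotProduct, cramer_transpose_apply]
  exact alternatingMap_add_smul_const detRowAlternating A u v

theorem charpoly_diagonal_sub_vecMulVec (d u v : ι → R) :
    (diagonal d - vecMulVec u v).charpoly =
      ∏ i, (X - C (d i)) + ∑ i, C (u i * v i) * ∏ j ∈ Finset.univ.erase i, (X - C (d j)) := by
  have charmatrix_eq : (diagonal d - vecMulVec u v).charmatrix =
      diagonal (fun i => X - C (d i)) + vecMulVec (fun i => C (u i)) (fun i => C (v i)) := by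
    ext1 i j
    by_cases hij : i = j <;> simp [hij, vecMulVec_apply, sub_add]
  rw [charpoly, charmatrix_eq, det_add_vecMulVec, det_diagonal, diagonal_transpose,
    cramer_eq_adjugate_mulVec, adjugate_diagonal]
  simp only [dotProduct, mulVec_diagonal, C_mul]
  congr! 2
  ring

/-- The d-companion matrix `D(I - cJ) + (μc)J` of `(X - μ) ∏ i, (X - d i)`. The scalar `c` stands
for the inverse of the degree `card ι + 1`; keeping it a parameter avoids division in `R`. -/
def dCompanion (c μ : R) (d : ι → R) : Matrix ι ι R :=
  diagonal d * (1 - c • of fun _ _ => 1) + (μ * c) • of fun _ _ => 1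

theorem dCompanion_eq_diagonal_sub_vecMulVec (c μ : R) (d : ι → R) :
    dCompanion c μ d = diagonal d - vecMulVec (fun i => c * (d i - μ)) 1 := by
  ext i j
  simp only [dCompanion, Matrix.mul_sub, Matrix.mul_one, Matrix.mul_smul, Matrix.add_apply,
    Matrix.sub_apply, Matrix.smul_apply, diagonal_mul, of_apply, vecMulVec_apply, smul_eq_mul,
    Pi.one_apply]
  ring

theorem sum_C_sub_mul_prod_erase (μ : R) (d : ι → R) :
    ∑ i, C (d i - μ) * ∏ j ∈ Finset.univ.erase i, (X - C (d j)) =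
      derivative ((X - C μ) * ∏ i, (X - C (d i))) -
        (Fintype.card ι + 1 : R[X]) * ∏ i, (X - C (d i)) := by
  have split_term (i : ι) : C (d i - μ) * ∏ j ∈ Finset.univ.erase i, (X - C (d j)) =
      (X - C μ) * ∏ j ∈ Finset.univ.erase i, (X - C (d j)) - ∏ j, (X - C (d j)) := by
    rw [← Finset.mul_prod_erase Finset.univ (fun j => X - C (d j)) (Finset.mem_univ i), C_sub]
    ring
  have derivative_eq : derivative ((X - C μ) * ∏ i, (X - C (d i))) =
      ∏ i, (X - C (d i)) + (X - C μ) * ∑ i, ∏ j ∈ Finset.univ.erase i, (X - C (d j)) := by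
    simp [derivative_mul, derivative_prod_finset]
  simp only [split_term, Finset.sum_sub_distrib, ← Finset.mul_sum, Finset.sum_const,
    Finset.card_univ, nsmul_eq_mul]
  rw [derivative_eq]
  ring

theorem charpoly_dCompanion (c μ : R) (d : ι → R) :
    (dCompanion c μ d).charpoly =
      C (1 - c * (Fintype.card ι + 1)) * ∏ i, (X - C (d i)) +
        C c * derivative ((X - C μ) * ∏ i, (X - C (d i))) := by
  rw [dCompanion_eq_diagonal_sub_vecMulVec, charpoly_diagonal_sub_vecMulVec]
  simp only [Pi.one_apply, mul_one, C_mul (a := c), mul_assoc, ← Finset.mul_sum]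
  rw [sum_C_sub_mul_prod_erase]
  simp only [C_sub, C_mul, C_add, C_1, map_natCast]
  ring

theorem d_companion_charpoly_general {c : R} (hc : c * (Fintype.card ι + 1) = 1) (μ : R)
    (d : ι → R) :
    (dCompanion c μ d).charpoly = C c * derivative ((X - C μ) * ∏ i, (X - C (d i))) ∧
      ∀ [IsDomain R], (dCompanion c μ d).charpoly.roots =
        (derivative ((X - C μ) * ∏ i, (X - C (d i)))).roots := by
  have charpoly_eq : (dCompanion c μ d).charpoly =
      C c * derivative ((X - C μ) * ∏ i, (X - C (d i))) := by
    rw [charpoly_dCompanion, hc, sub_self, C_0, zero_mul, zero_add]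
  exact ⟨charpoly_eq, fun {_} => by
    rw [charpoly_eq, roots_C_mul _ (left_ne_zero_of_mul_eq_one hc)]⟩

end DCompanion

/-- the characteristic polynomial of the d-companion matrix
A = D(I - (1/n)J) + (λ₁/n)J of p(t) = ∏ (t - λᵢ) equals (1/n)·p'; equivalently,
the multiset of eigenvalues of A (with multiplicity) is the multiset of critical
points of p. -/
theorem d_companion_charpoly (n : ℕ) (hn : 2 ≤ n) (lam : Fin n → ℂ)
    (p : Polynomial ℂ) (hp : p = ∏ i, (X - C (lam i)))
    (D : Matrix (Fin (n - 1)) (Fin (n - 1)) ℂ)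
    (hD : D = Matrix.diagonal fun i : Fin (n - 1) => lam ⟨(i : ℕ) + 1, by have := i.isLt; omega⟩)
    (J : Matrix (Fin (n - 1)) (Fin (n - 1)) ℂ)
    (hJ : J = Matrix.of fun _ _ => 1)
    (A : Matrix (Fin (n - 1)) (Fin (n - 1)) ℂ)
    (hA : A = D * (1 - ((n : ℂ))⁻¹ • J) + ((lam ⟨0, by omega⟩) / (n : ℂ)) • J) :
    A.charpoly = C ((n : ℂ))⁻¹ * p.derivative ∧
      A.charpoly.roots = p.derivative.roots := by
  obtain ⟨m, rfl⟩ : ∃ m, n = m + 1 := ⟨n - 1, by omega⟩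
  have hc : ((m + 1 : ℕ) : ℂ)⁻¹ * (Fintype.card (Fin m) + 1) = 1 := by
    simp [Nat.cast_add_one_ne_zero]
  have hA_dCompanion :
      A = dCompanion ((m + 1 : ℕ) : ℂ)⁻¹ (lam 0) (fun i : Fin m => lam i.succ) := by
    rw [hA, hD, hJ, div_eq_mul_inv]
    rfl
  rw [hp, Fin.prod_univ_succ, hA_dCompanion]
  obtain ⟨charpoly_eq, roots_eq⟩ := d_companion_charpoly_general hc (lam 0) fun i => lam i.succ
  exact ⟨charpoly_eq, roots_eq⟩
end

section
/- Let Λ = {λ_1,…,λ_n} (n ≥ 2) be a finite multiset of complex numbers, let U ∈ M_n(ℂ) be unitary, and suppose that for some i ∈ {1,…,n} every entry of the i-th row of U satisfies |u_{ij}| = 1/√n. If A = U D U* with D = diag(λ_1,…,λ_n), then the multiset of eigenvalues (with multiplicity) of the principal submatrix A_{(i)} obtained by deleting the i-th row and i-th column of A equals the multiset Λ' of critical points of Λ; equivalently, the characteristic polynomial of A_{(i)} equals (1/n)·p'(t), where p(t) = ∏_{j=1}^n (t − λ_j). -/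
/-!
Conjugating the characteristic matrix by the invertible matrix `V`, with inverse `W`, conjugates its
adjugate, whose `(i, i)` entry is the characteristic polynomial of the principal submatrix. For
`A = V D W` that entry is `∑ⱼ Vᵢⱼ Wⱼᵢ ∏_{k ≠ j} (X - λₖ)`: the weights of the row replace the unit
weights in the product rule for `p'`, so equal weights, which sum to `(V W)ᵢᵢ = 1`, give `p' / n`.
-/

open Polynomial Matrix

/-- The embedding Fin (n-1) → Fin n skipping index i. -/
def delIdx {n : ℕ} (i : Fin n) (j : Fin (n - 1)) : Fin n :=
  if h : (j : ℕ) < (i : ℕ) then ⟨j, by have := i.isLt; omega⟩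
  else ⟨(j : ℕ) + 1, by have := j.isLt; have := i.isLt; omega⟩

/-- The principal submatrix of A obtained by deleting the i-th row and column. -/
def delSub {n : ℕ} {R : Type*} (A : Matrix (Fin n) (Fin n) R) (i : Fin n) :
    Matrix (Fin (n - 1)) (Fin (n - 1)) R :=
  A.submatrix (delIdx i) (delIdx i)

section Conjugation

variable {ι R : Type*} [Fintype ι] [DecidableEq ι] [CommRing R]

theorem adjugate_eq_det_smul_of_mul_eq_one {V W : Matrix ι ι R} (hVW : V * W = 1) :
    V.adjugate = V.det • W :=
  calc
    V.adjugate = V.adjugate * V * W := by rw [Matrix.mul_assoc, hVW, Matrix.mul_one]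
    _ = V.det • W := by rw [adjugate_mul, smul_mul, Matrix.one_mul]

theorem adjugate_conj_of_mul_eq_one {V W : Matrix ι ι R} (hVW : V * W = 1) (M : Matrix ι ι R) :
    (V * M * W).adjugate = V * M.adjugate * W := by
  have hdet : V.det * W.det = 1 := by rw [← det_mul, hVW, det_one]
  calc
    (V * M * W).adjugate = W.adjugate * (M.adjugate * V.adjugate) := by
      rw [adjugate_mul_distrib, adjugate_mul_distrib]
    _ = (V.det * W.det) • (V * M.adjugate * W) := by
      rw [adjugate_eq_det_smul_of_mul_eq_one hVW,
        adjugate_eq_det_smul_of_mul_eq_one (mul_eq_one_comm.mp hVW)]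
      simp only [Matrix.smul_mul, Matrix.mul_smul, smul_smul, Matrix.mul_assoc]
    _ = V * M.adjugate * W := by rw [hdet, one_smul]

theorem map_C_mul_map_C_eq_one {V W : Matrix ι ι R} (hVW : V * W = 1) :
    V.map (C : R →+* R[X]) * W.map (C : R →+* R[X]) = 1 := by
  rw [← Matrix.map_mul, hVW, Matrix.map_one _ C_0 C_1]

theorem charmatrix_conj_of_mul_eq_one {V W : Matrix ι ι R} (hVW : V * W = 1) (M : Matrix ι ι R) :
    (V * M * W).charmatrix =
      V.map (C : R →+* R[X]) * M.charmatrix * W.map (C : R →+* R[X]) := by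
  have hscalar : V.map (C : R →+* R[X]) * scalar ι X * W.map (C : R →+* R[X]) = scalar ι X := by
    rw [← (scalar_commute X (Commute.all X) _).eq, Matrix.mul_assoc, map_C_mul_map_C_eq_one hVW,
      Matrix.mul_one]
  rw [charmatrix, charmatrix, Matrix.mul_sub, Matrix.sub_mul, hscalar]
  simp only [RingHom.mapMatrix_apply, Matrix.map_mul]

end Conjugation

theorem charmatrix_submatrix_of_injective {ι κ R : Type*} [Fintype ι] [DecidableEq ι] [Fintype κ]
    [DecidableEq κ] [CommRing R] (A : Matrix ι ι R) {f : κ → ι} (hf : Function.Injective f) :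
    (A.submatrix f f).charmatrix = A.charmatrix.submatrix f f := by
  ext1 a b
  simp only [charmatrix_apply, submatrix_apply, diagonal_apply, hf.eq_iff]

section PrincipalSubmatrix

variable {n : ℕ} {R : Type*} [CommRing R]

theorem delIdx_eq_succAbove {m : ℕ} (i : Fin (m + 1)) : delIdx i = i.succAbove := by
  funext j
  simp only [delIdx, Fin.succAbove, Fin.lt_def, Fin.val_castSucc]
  rfl

theorem delIdx_injective (i : Fin n) : Function.Injective (delIdx i) := by
  obtain _ | m := n
  · exact i.elim0
  · rw [delIdx_eq_succAbove]
    exact Fin.succAbove_right_injective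

theorem det_delSub (A : Matrix (Fin n) (Fin n) R) (i : Fin n) :
    (delSub A i).det = A.adjugate i i := by
  obtain _ | m := n
  · exact i.elim0
  · rw [adjugate_fin_succ_eq_det_submatrix, Even.neg_one_pow ⟨(i : ℕ), rfl⟩, one_mul, delSub,
      delIdx_eq_succAbove]

theorem charpoly_delSub (A : Matrix (Fin n) (Fin n) R) (i : Fin n) :
    (delSub A i).charpoly = A.charmatrix.adjugate i i := by
  rw [← det_delSub, charpoly, delSub, charmatrix_submatrix_of_injective A (delIdx_injective i),
    delSub]

theorem charpoly_delSub_conj_diagonal (lam : Fin n → R) {V W : Matrix (Fin n) (Fin n) R}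
    (hVW : V * W = 1) (i : Fin n) :
    (delSub (V * diagonal lam * W) i).charpoly =
      ∑ j, C (V i j * W j i) * ∏ k ∈ Finset.univ.erase j, (X - C (lam k)) := by
  rw [charpoly_delSub, charmatrix_conj_of_mul_eq_one hVW,
    adjugate_conj_of_mul_eq_one (map_C_mul_map_C_eq_one hVW), charmatrix_diagonal,
    adjugate_diagonal, Matrix.mul_apply]
  refine Finset.sum_congr rfl fun j _ => ?_
  rw [mul_diagonal, map_apply, map_apply, C_mul]
  ring

end PrincipalSubmatrix

theorem derivative_prod_X_sub_C {ι R : Type*} [DecidableEq ι] [CommRing R] (s : Finset ι)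
    (a : ι → R) :
    derivative (∏ j ∈ s, (X - C (a j))) = ∑ j ∈ s, ∏ k ∈ s.erase j, (X - C (a k)) := by
  simp only [derivative_prod_finset, derivative_X_sub_C, mul_one]

theorem mul_star_eq_inv_natCast {𝕜 : Type*} [RCLike 𝕜] {n : ℕ} {z : 𝕜}
    (hz : ‖z‖ = 1 / Real.sqrt n) : z * star z = (n : 𝕜)⁻¹ := by
  have hsq : ‖z‖ ^ 2 = (n : ℝ)⁻¹ := by
    rw [hz, div_pow, one_pow, Real.sq_sqrt n.cast_nonneg, one_div]
  rw [RCLike.star_def, RCLike.mul_conj, ← RCLike.ofReal_pow, hsq, RCLike.ofReal_inv,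
    RCLike.ofReal_natCast]

theorem hadamard_row_principal_submatrix_general {K : Type*} [Field K] {n : ℕ} (lam : Fin n → K)
    {V W : Matrix (Fin n) (Fin n) K} (hVW : V * W = 1) (i : Fin n)
    (hrow : ∀ j, V i j * W j i = (n : K)⁻¹) (A : Matrix (Fin n) (Fin n) K)
    (hA : A = V * diagonal lam * W) (p : K[X]) (hp : p = ∏ j, (X - C (lam j))) :
    (delSub A i).charpoly.roots = p.derivative.roots ∧
      (delSub A i).charpoly = C (n : K)⁻¹ * p.derivative := by
  have hcharpoly : (delSub A i).charpoly = C (n : K)⁻¹ * p.derivative := by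
    rw [hA, charpoly_delSub_conj_diagonal lam hVW, hp, derivative_prod_X_sub_C, Finset.mul_sum]
    simp only [hrow]
  have hinv : (n : K)⁻¹ ≠ 0 := by
    intro hzero
    have hdiag : (V * W) i i = 0 := by
      rw [Matrix.mul_apply]
      exact Finset.sum_eq_zero fun j _ => (hrow j).trans hzero
    rw [hVW, one_apply_eq] at hdiag
    exact one_ne_zero hdiag
  exact ⟨by rw [hcharpoly, roots_C_mul _ hinv], hcharpoly⟩

/-- if U is unitary with every entry of its i-th row of modulus
1/√n, and A = U D U* with D = diag(λ₁,…,λₙ), then the spectrum (with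
multiplicity) of the principal submatrix A_{(i)} is the multiset of critical
points of Λ = {λ₁,…,λₙ}; equivalently, the characteristic polynomial of A_{(i)}
equals (1/n)·p'(t), where p(t) = ∏ (t - λⱼ). -/
theorem hadamard_row_principal_submatrix (n : ℕ) (hn : 2 ≤ n)
    (lam : Fin n → ℂ)
    (U : Matrix (Fin n) (Fin n) ℂ) (hU : U ∈ Matrix.unitaryGroup (Fin n) ℂ)
    (i : Fin n) (hrow : ∀ j, ‖U i j‖ = 1 / Real.sqrt n)
    (A : Matrix (Fin n) (Fin n) ℂ)
    (hA : A = U * Matrix.diagonal lam * Uᴴ)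
    (p : Polynomial ℂ) (hp : p = ∏ j, (X - C (lam j))) :
    (delSub A i).charpoly.roots = p.derivative.roots ∧
      (delSub A i).charpoly = C ((n : ℂ))⁻¹ * p.derivative :=
  hadamard_row_principal_submatrix_general lam (mem_unitaryGroup_iff.mp hU) i
    (fun j => mul_star_eq_inv_natCast (hrow j)) A hA p hp
end
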